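/- (Deterministic core of Theorem 4.4: the minimum-norm global minimizer of the supervised contrastive loss exhibits class collapse.) In the structured contrastive dataset with μ = 0 and p ≥ 3, every minimum-norm global minimizer of L_SCL — that is, every W** ∈ ℝ^{p×D} minimizing the Frobenius norm ‖W‖_F among all global minimizers W of L_SCL — satisfies W** v_2 = 0; hence the subclass feature v_2 is annihilated by the learned linear map. -/

import Mathlib

open Matrix

/-- The contrastive trace loss `Tr(-2 WᵀW P + WᵀW M WᵀW M)`. -/
noncomputable def CLTraceLoss {p D : ℕ} (P M : Matrix (Fin D) (Fin D) ℝ)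
    (W : Matrix (Fin p) (Fin D) ℝ) : ℝ :=
  Matrix.trace ((-2 : ℝ) • (Wᵀ * W * P) + Wᵀ * W * M * (Wᵀ * W) * M)

/-!
With `μ = 0`, let `ν i` be the noise direction of the `i`-th point, `η = ∑ i, ysub i • ν i`, and let
`P` be the orthogonal projection onto `span {v 2, η}`. Balance of the subclasses makes `P` commute
with the second moment `M` and annihilate the class means. Hence `M` is the sum of the positive
semidefinite matrices `(1 - P) * M * (1 - P)` and `P * M * P`, and replacing `W` by `W * (1 - P)`
only drops nonnegative terms from the loss, while it lowers `‖W‖_F` unless `W * P = 0`. So a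
minimum-norm global minimizer `W` satisfies `W * P = 0`, and in particular `W *ᵥ v 2 = 0`.
-/

section Trace

variable {d : Type*} [Fintype d]

theorem trace_mul_nonneg_of_posSemidef {A B : Matrix d d ℝ} (hA : A.PosSemidef)
    (hB : B.PosSemidef) : 0 ≤ (A * B).trace := by
  obtain ⟨k, b, rfl⟩ := posSemidef_iff_eq_sum_vecMulVec.1 hB
  simp only [Matrix.mul_sum, trace_sum, mul_vecMulVec, trace_vecMulVec, dotProduct_comm _ (star _)]
  exact Finset.sum_nonneg fun i _ => hA.dotProduct_mulVec_nonneg (b i)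

theorem trace_mul_mul_mul_le_add_of_posSemidef {G A B : Matrix d d ℝ} (hG : G.PosSemidef)
    (hA : A.PosSemidef) (hB : B.PosSemidef) :
    (G * A * G * A).trace ≤ (G * (A + B) * G * (A + B)).trace := by
  have nonneg {C : Matrix d d ℝ} (hC : C.PosSemidef) : 0 ≤ (G * C * G * B).trace :=
    trace_mul_nonneg_of_posSemidef
      (by simpa only [hG.1.eq] using hC.mul_mul_conjTranspose_same G) hB
  have cross_comm : (G * B * G * A).trace = (G * A * G * B).trace := by
    rw [mul_assoc (G * B), trace_mul_comm, ← mul_assoc]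
  have expand : (G * (A + B) * G * (A + B)).trace
      = (G * A * G * A).trace + 2 * (G * A * G * B).trace + (G * B * G * B).trace := by
    simp only [mul_add, add_mul, trace_add, cross_comm]
    ring
  linarith [nonneg hA, nonneg hB]

theorem sum_sq_eq_trace_mul_transpose {p R : Type*} [Fintype p] [Semiring R] (W : Matrix p d R) :
    ∑ i, ∑ j, W i j ^ 2 = (W * Wᵀ).trace := by
  simp only [trace, diag_apply, mul_apply, transpose_apply, sq]

end Trace

section Projection

theorem one_sub_mul_mul_one_sub_add_of_commute {R : Type*} [Ring R] {e a : R}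
    (he : IsIdempotentElem e) (hea : Commute e a) : (1 - e) * a * (1 - e) + e * a * e = a := by
  rw [mul_assoc, ← ((Commute.one_left a).sub_left hea).eq, ← mul_assoc, he.one_sub.eq,
    mul_assoc e, ← hea.eq, ← mul_assoc, he.eq, ← add_mul, sub_add_cancel, one_mul]

variable {d : Type*} [Fintype d] {P : Matrix d d ℝ}

theorem isSymm_of_isStarProjection (hP : IsStarProjection P) : P.IsSymm :=
  (conjTranspose_eq_transpose_of_trivial P).symm.trans hP.isSelfAdjoint.star_eq

theorem sum_sq_mul_of_isStarProjection {p : Type*} [Fintype p] (hP : IsStarProjection P)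
    (W : Matrix p d ℝ) :
    ∑ i, ∑ j, (W * P) i j ^ 2 = (W * P * Wᵀ).trace := by
  rw [sum_sq_eq_trace_mul_transpose, transpose_mul, (isSymm_of_isStarProjection hP).eq,
    Matrix.mul_assoc, ← Matrix.mul_assoc P, hP.isIdempotentElem.eq, Matrix.mul_assoc]

theorem sum_sq_eq_add_of_isStarProjection {p : Type*} [Fintype p] [DecidableEq d]
    (hP : IsStarProjection P) (W : Matrix p d ℝ) :
    ∑ i, ∑ j, W i j ^ 2
      = ∑ i, ∑ j, (W * (1 - P) : Matrix p d ℝ) i j ^ 2 + ∑ i, ∑ j, (W * P) i j ^ 2 := by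
  rw [sum_sq_mul_of_isStarProjection hP.one_sub, sum_sq_mul_of_isStarProjection hP,
    sum_sq_eq_trace_mul_transpose, ← trace_add, ← Matrix.add_mul, ← Matrix.mul_add,
    sub_add_cancel, Matrix.mul_one]

/-- The orthogonal projection onto the line spanned by `a`; it is `0` for `a = 0`, by the convention
`0⁻¹ = 0`. -/
noncomputable def lineProj (a : d → ℝ) : Matrix d d ℝ :=
  (a ⬝ᵥ a)⁻¹ • vecMulVec a a

theorem lineProj_mulVec (a b : d → ℝ) : lineProj a *ᵥ b = ((a ⬝ᵥ a)⁻¹ * (a ⬝ᵥ b)) • a := by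
  rw [lineProj, smul_mulVec, vecMulVec_mulVec, op_smul_eq_smul, smul_smul]

theorem lineProj_mulVec_self (a : d → ℝ) : lineProj a *ᵥ a = a := by
  by_cases ha : a ⬝ᵥ a = 0
  · rw [dotProduct_self_eq_zero.1 ha, mulVec_zero]
  · rw [lineProj_mulVec, inv_mul_cancel₀ ha, one_smul]

theorem isStarProjection_lineProj (a : d → ℝ) : IsStarProjection (lineProj a) where
  isIdempotentElem := by
    rw [IsIdempotentElem]
    nth_rw 2 [lineProj]
    rw [Matrix.mul_smul, mul_vecMulVec, lineProj_mulVec_self, lineProj]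
  isSelfAdjoint := by
    rw [IsSelfAdjoint, star_eq_conjTranspose, conjTranspose_eq_transpose_of_trivial, lineProj,
      transpose_smul, transpose_vecMulVec]

theorem isStarProjection_lineProj_add {a b : d → ℝ} (hab : a ⬝ᵥ b = 0) :
    IsStarProjection (lineProj a + lineProj b) := by
  refine (isStarProjection_lineProj a).add (isStarProjection_lineProj b) ?_
  rw [lineProj, lineProj, smul_mul_smul_comm, vecMulVec_mul_vecMulVec, hab, zero_smul,
    vecMulVec_zero, smul_zero]

theorem commute_sum_vecMulVec_of_mulVec_eq_smul {ι : Type*} [Fintype ι] {x : ι → d → ℝ}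
    {s : ι → ℝ} {q : d → ℝ} {a : ℝ} (hP : P.IsSymm) (hPx : ∀ i, P *ᵥ x i = s i • q)
    (hq : ∑ i, s i • x i = a • q) : Commute P (∑ i, vecMulVec (x i) (x i)) := by
  have left : P * ∑ i, vecMulVec (x i) (x i) = a • vecMulVec q q := by
    calc P * ∑ i, vecMulVec (x i) (x i)
        = ∑ i, vecMulVecBilin ℝ ℝ q (s i • x i) := by
          simp only [Matrix.mul_sum, mul_vecMulVec, hPx, smul_vecMulVec, vecMulVecBilin_apply_apply,
            vecMulVec_smul]
      _ = a • vecMulVec q q := by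
          rw [← map_sum, hq, map_smul, vecMulVecBilin_apply_apply]
  have right : (∑ i, vecMulVec (x i) (x i)) * P = a • vecMulVec q q := by
    simpa [transpose_mul, transpose_sum, hP.eq] using congrArg transpose left
  exact left.trans right.symm

end Projection

section MinNorm

variable {p d : Type*} [Fintype p] [Fintype d]

/-- `W` has the smallest Frobenius norm among all global minimizers of `f`. -/
def IsMinNormMinimizer (f : Matrix p d ℝ → ℝ) (W : Matrix p d ℝ) : Prop :=
  (∀ W', f W ≤ f W') ∧ ∀ W', (∀ W'', f W' ≤ f W'') →
    Real.sqrt (∑ i, ∑ j, W i j ^ 2) ≤ Real.sqrt (∑ i, ∑ j, W' i j ^ 2)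

theorem IsMinNormMinimizer.mul_eq_zero [DecidableEq d] {f : Matrix p d ℝ → ℝ} {W : Matrix p d ℝ}
    (hW : IsMinNormMinimizer f W) {P : Matrix d d ℝ} (hP : IsStarProjection P)
    (hf : f (W * (1 - P)) ≤ f W) : W * P = 0 := by
  have sum_sq_nonneg (A : Matrix p d ℝ) : 0 ≤ ∑ i, ∑ j, A i j ^ 2 := by positivity
  have norm_le : ∑ i, ∑ j, W i j ^ 2 ≤ ∑ i, ∑ j, (W * (1 - P) : Matrix p d ℝ) i j ^ 2 :=
    (Real.sqrt_le_sqrt_iff (sum_sq_nonneg _)).1 (hW.2 _ fun W'' => hf.trans (hW.1 W''))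
  have sum_sq_eq_zero : ∑ i, ∑ j, (W * P) i j ^ 2 = 0 := by
    linarith [sum_sq_eq_add_of_isStarProjection hP W, sum_sq_nonneg (W * P)]
  rwa [sum_sq_eq_trace_mul_transpose, ← conjTranspose_eq_transpose_of_trivial,
    trace_mul_conjTranspose_self_eq_zero_iff] at sum_sq_eq_zero

end MinNorm

section Loss

variable {D r : ℕ} {P M Mp : Matrix (Fin D) (Fin D) ℝ}

theorem CLTraceLoss_mul {E : ℕ} (Mp M : Matrix (Fin D) (Fin D) ℝ) (R : Matrix (Fin E) (Fin D) ℝ)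
    (W : Matrix (Fin r) (Fin E) ℝ) :
    CLTraceLoss Mp M (W * R) = CLTraceLoss (R * Mp * Rᵀ) (R * M * Rᵀ) W := by
  have linear : ((W * R)ᵀ * (W * R) * Mp).trace = (Wᵀ * W * (R * Mp * Rᵀ)).trace := by
    rw [transpose_mul, Matrix.mul_assoc, Matrix.mul_assoc, trace_mul_comm]
    simp only [Matrix.mul_assoc]
  have quadratic : ((W * R)ᵀ * (W * R) * M * ((W * R)ᵀ * (W * R)) * M).trace
      = (Wᵀ * W * (R * M * Rᵀ) * (Wᵀ * W) * (R * M * Rᵀ)).trace := by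
    rw [transpose_mul]
    simp only [Matrix.mul_assoc]
    rw [trace_mul_comm]
    simp only [Matrix.mul_assoc]
  rw [CLTraceLoss, CLTraceLoss, trace_add, trace_add, trace_smul, trace_smul, linear, quadratic]

theorem CLTraceLoss_le_add {A B : Matrix (Fin D) (Fin D) ℝ} (hA : A.PosSemidef)
    (hB : B.PosSemidef) (W : Matrix (Fin r) (Fin D) ℝ) :
    CLTraceLoss Mp A W ≤ CLTraceLoss Mp (A + B) W := by
  simp only [CLTraceLoss, trace_add ((-2 : ℝ) • _)]
  gcongr
  simpa only [Matrix.mul_assoc, conjTranspose_eq_transpose_of_trivial] using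
    trace_mul_mul_mul_le_add_of_posSemidef (posSemidef_conjTranspose_mul_self W) hA hB

theorem CLTraceLoss_mul_one_sub_le (hP : IsStarProjection P) (hM : M.PosSemidef)
    (hPM : Commute P M) (hMp : Mp.IsSymm) (hPMp : P * Mp = 0) (W : Matrix (Fin r) (Fin D) ℝ) :
    CLTraceLoss Mp M (W * (1 - P)) ≤ CLTraceLoss Mp M W := by
  have hPt : Pᵀ = P := isSymm_of_isStarProjection hP
  have hMpP : Mp * P = 0 := by
    simpa only [transpose_mul, hMp.eq, hPt, transpose_zero] using congrArg transpose hPMp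
  have Mp_conj : (1 - P) * Mp * (1 - P) = Mp := by
    rw [sub_mul, one_mul, hPMp, sub_zero, mul_sub, mul_one, hMpP, sub_zero]
  have conj_posSemidef {R : Matrix (Fin D) (Fin D) ℝ} (hR : IsStarProjection R) :
      (R * M * R).PosSemidef := by
    simpa only [conjTranspose_eq_transpose_of_trivial, (isSymm_of_isStarProjection hR).eq]
      using hM.mul_mul_conjTranspose_same R
  calc CLTraceLoss Mp M (W * (1 - P))
      = CLTraceLoss Mp ((1 - P) * M * (1 - P)) W := by
        rw [CLTraceLoss_mul, transpose_sub, transpose_one, hPt, Mp_conj]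
    _ ≤ CLTraceLoss Mp ((1 - P) * M * (1 - P) + P * M * P) W :=
        CLTraceLoss_le_add (conj_posSemidef hP.one_sub) (conj_posSemidef hP) W
    _ = CLTraceLoss Mp M W := by
        rw [one_sub_mul_mul_one_sub_add_of_commute hP.isIdempotentElem hPM]

theorem IsMinNormMinimizer.mul_eq_zero_of_commute {W : Matrix (Fin r) (Fin D) ℝ}
    (hW : IsMinNormMinimizer (CLTraceLoss Mp M) W) (hP : IsStarProjection P) (hM : M.PosSemidef)
    (hPM : Commute P M) (hMp : Mp.IsSymm) (hPMp : P * Mp = 0) : W * P = 0 :=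
  hW.mul_eq_zero hP (CLTraceLoss_mul_one_sub_le hP hM hPM hMp hPMp W)

end Loss

section Balance

variable {ι τ : Type*}

theorem sum_smul_comp_eq_zero [Fintype ι] [DecidableEq τ] {R E : Type*} [Semiring R]
    [AddCommMonoid E] [Module R E] {s : ι → R} {t : ι → τ}
    (h : ∀ j, ∑ i with t i = t j, s i = 0) (g : τ → E) : ∑ i, s i • g (t i) = 0 := by
  rw [← Finset.sum_fiberwise_of_maps_to
    fun i _ => Finset.mem_image_of_mem t (Finset.mem_univ i)]
  refine Finset.sum_eq_zero fun a ha => ?_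
  obtain ⟨j, -, rfl⟩ := Finset.mem_image.1 ha
  calc ∑ i with t i = t j, s i • g (t i) = ∑ i with t i = t j, s i • g (t j) :=
        Finset.sum_congr rfl fun i hi => by rw [(Finset.mem_filter.1 hi).2]
    _ = 0 := by rw [← Finset.sum_smul, h j, zero_smul]

theorem sum_sign_eq_zero_of_card_eq {S : Finset ι} {s : ι → ℝ} (hs : ∀ i ∈ S, s i = 1 ∨ s i = -1)
    (hcard : Finset.card {i ∈ S | s i = 1} = Finset.card {i ∈ S | s i = -1}) :
    ∑ i ∈ S, s i = 0 := by
  have sign_eq (i) (hi : i ∈ S) :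
      s i = (if s i = 1 then 1 else 0) - if s i = -1 then 1 else 0 := by
    rcases hs i hi with h | h <;> norm_num [h]
  rw [Finset.sum_congr rfl sign_eq, Finset.sum_sub_distrib, Finset.sum_boole, Finset.sum_boole,
    hcard, sub_self]

end Balance

section SubclassDataset

variable {d ι τ : Type*} [Fintype d] [Fintype ι]

/-- The points `x i = u (t i) + (s i * φ) • v + σ • ν i`: a part `u (t i)` that depends only on the
attributes `t i`, a subclass feature `v` with sign `s i`, and noise in a direction `ν i` of its own.
Balance means that the signs cancel over the points with any given attributes. The feature, the
common parts and the noise are mutually orthogonal, and the noise directions are orthonormal. -/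
structure IsSubclassDataset [DecidableEq ι] [DecidableEq τ]
    (x : ι → d → ℝ) (t : ι → τ) (s : ι → ℝ) (u : τ → d → ℝ) (v : d → ℝ) (ν : ι → d → ℝ)
    (φ σ : ℝ) : Prop where
  point_eq : ∀ i, x i = u (t i) + (s i * φ) • v + σ • ν i
  sign_mul_self : ∀ i, s i * s i = 1
  balanced : ∀ j, ∑ i with t i = t j, s i = 0
  feature_common : ∀ i, v ⬝ᵥ u (t i) = 0
  noise_common : ∀ i j, ν i ⬝ᵥ u (t j) = 0
  feature_noise : ∀ i, v ⬝ᵥ ν i = 0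
  noise_noise : ∀ i j, ν i ⬝ᵥ ν j = if i = j then 1 else 0

/-- The orthogonal projection onto the span of `v` and of the signed sum of the noise directions,
provided that these are orthogonal. -/
noncomputable def subclassProj (s : ι → ℝ) (v : d → ℝ) (ν : ι → d → ℝ) : Matrix d d ℝ :=
  lineProj v + lineProj (∑ i, s i • ν i)

namespace IsSubclassDataset

variable [DecidableEq ι] [DecidableEq τ] {x : ι → d → ℝ} {t : ι → τ}
  {s : ι → ℝ} {u : τ → d → ℝ} {v : d → ℝ} {ν : ι → d → ℝ} {φ σ : ℝ}

theorem feature_dotProduct_sum_noise (h : IsSubclassDataset x t s u v ν φ σ) :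
    v ⬝ᵥ ∑ i, s i • ν i = 0 := by
  simp only [dotProduct_sum, dotProduct_smul, h.feature_noise, smul_zero, Finset.sum_const_zero]

theorem sum_noise_dotProduct_noise (h : IsSubclassDataset x t s u v ν φ σ) (j : ι) :
    (∑ i, s i • ν i) ⬝ᵥ ν j = s j := by
  simp only [sum_dotProduct, smul_dotProduct, h.noise_noise, smul_eq_mul, mul_ite, mul_one,
    mul_zero, Finset.sum_ite_eq', Finset.mem_univ, if_true]

theorem sum_noise_dotProduct_self (h : IsSubclassDataset x t s u v ν φ σ) :
    (∑ i, s i • ν i) ⬝ᵥ ∑ i, s i • ν i = Fintype.card ι := by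
  rw [dotProduct_sum]
  simp only [dotProduct_smul, h.sum_noise_dotProduct_noise, smul_eq_mul, h.sign_mul_self,
    Finset.sum_const, Finset.card_univ, nsmul_eq_mul, mul_one]

theorem sum_noise_dotProduct_common (h : IsSubclassDataset x t s u v ν φ σ) (j : ι) :
    (∑ i, s i • ν i) ⬝ᵥ u (t j) = 0 := by
  simp only [sum_dotProduct, smul_dotProduct, h.noise_common, smul_zero, Finset.sum_const_zero]

theorem isStarProjection_subclassProj (h : IsSubclassDataset x t s u v ν φ σ) :
    IsStarProjection (subclassProj s v ν) :=
  isStarProjection_lineProj_add h.feature_dotProduct_sum_noise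

theorem subclassProj_mulVec_feature (h : IsSubclassDataset x t s u v ν φ σ) :
    subclassProj s v ν *ᵥ v = v := by
  rw [subclassProj, add_mulVec, lineProj_mulVec_self, lineProj_mulVec, dotProduct_comm _ v,
    h.feature_dotProduct_sum_noise, mul_zero, zero_smul, add_zero]

theorem subclassProj_mulVec_common (h : IsSubclassDataset x t s u v ν φ σ) (i : ι) :
    subclassProj s v ν *ᵥ u (t i) = 0 := by
  rw [subclassProj, add_mulVec, lineProj_mulVec, lineProj_mulVec, h.feature_common,
    h.sum_noise_dotProduct_common, mul_zero, mul_zero, zero_smul, zero_smul, add_zero]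

theorem subclassProj_mulVec_noise (h : IsSubclassDataset x t s u v ν φ σ) (i : ι) :
    subclassProj s v ν *ᵥ ν i = ((Fintype.card ι : ℝ)⁻¹ * s i) • ∑ j, s j • ν j := by
  rw [subclassProj, add_mulVec, lineProj_mulVec, lineProj_mulVec, h.feature_noise,
    h.sum_noise_dotProduct_self, h.sum_noise_dotProduct_noise, mul_zero, zero_smul, zero_add]

theorem subclassProj_mulVec_point (h : IsSubclassDataset x t s u v ν φ σ) (i : ι) :
    subclassProj s v ν *ᵥ x i
      = s i • (φ • v + ((Fintype.card ι : ℝ)⁻¹ * σ) • ∑ j, s j • ν j) := by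
  rw [h.point_eq, mulVec_add, mulVec_add, mulVec_smul, mulVec_smul, h.subclassProj_mulVec_common,
    h.subclassProj_mulVec_feature, h.subclassProj_mulVec_noise]
  module

theorem sum_sign_smul_point [Nonempty ι] (h : IsSubclassDataset x t s u v ν φ σ) :
    ∑ i, s i • x i
      = (Fintype.card ι : ℝ) • (φ • v + ((Fintype.card ι : ℝ)⁻¹ * σ) • ∑ j, s j • ν j) := by
  calc ∑ i, s i • x i = ∑ i, (s i • u (t i) + (s i * s i * φ) • v + σ • s i • ν i) :=
        Finset.sum_congr rfl fun i _ => by rw [h.point_eq]; module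
    _ = (Fintype.card ι : ℝ) • φ • v + σ • ∑ i, s i • ν i := by
        simp only [Finset.sum_add_distrib, sum_smul_comp_eq_zero h.balanced, h.sign_mul_self,
          Finset.sum_const, Finset.card_univ, Finset.smul_sum, zero_add, one_mul,
          Nat.cast_smul_eq_nsmul]
    _ = _ := by
        rw [smul_add, smul_smul _ (_ * σ), mul_inv_cancel_left₀ (by positivity)]

theorem commute_subclassProj [Nonempty ι] (h : IsSubclassDataset x t s u v ν φ σ) :
    Commute (subclassProj s v ν) (∑ i, vecMulVec (x i) (x i)) :=
  commute_sum_vecMulVec_of_mulVec_eq_smul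
    (isSymm_of_isStarProjection h.isStarProjection_subclassProj)
    h.subclassProj_mulVec_point h.sum_sign_smul_point

theorem subclassProj_mulVec_sum_smul_comp (h : IsSubclassDataset x t s u v ν φ σ) (g : τ → ℝ) :
    subclassProj s v ν *ᵥ ∑ i, g (t i) • x i = 0 := by
  simp only [mulVec_sum, mulVec_smul, h.subclassProj_mulVec_point, smul_comm (g _) (s _)]
  exact sum_smul_comp_eq_zero h.balanced fun a => g a • _

theorem mulVec_feature_eq_zero {D r : ℕ} {x : ι → Fin D → ℝ} {u : τ → Fin D → ℝ} {v : Fin D → ℝ}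
    {ν : ι → Fin D → ℝ} [Nonempty ι] (h : IsSubclassDataset x t s u v ν φ σ) {c : ℝ} (hc : 0 ≤ c)
    {Mp : Matrix (Fin D) (Fin D) ℝ} (hMp : Mp.IsSymm) (hPMp : subclassProj s v ν * Mp = 0)
    {W : Matrix (Fin r) (Fin D) ℝ}
    (hW : IsMinNormMinimizer (CLTraceLoss Mp (c • ∑ i, vecMulVec (x i) (x i))) W) :
    W *ᵥ v = 0 := by
  have second_moment_posSemidef : (c • ∑ i, vecMulVec (x i) (x i)).PosSemidef :=
    (posSemidef_sum _ fun i _ => posSemidef_vecMulVec_self_star (x i)).smul hc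
  have mul_proj : W * subclassProj s v ν = 0 := hW.mul_eq_zero_of_commute
    h.isStarProjection_subclassProj second_moment_posSemidef (h.commute_subclassProj.smul_right c)
    hMp hPMp
  rw [← h.subclassProj_mulVec_feature, mulVec_mulVec, mul_proj, zero_mulVec]

end IsSubclassDataset

end SubclassDataset

section StructuredDataset

variable {N K T D : ℕ} {y ysub ρ : Fin N → ℝ} {κ : Fin N → ℕ} (hy : ∀ i, y i = 1 ∨ y i = -1)
  (hysub : ∀ i, ysub i = 1 ∨ ysub i = -1) (hρ : ∀ i, ρ i = 1 ∨ ρ i = -1)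
  (hκ : ∀ i, 3 ≤ κ i ∧ κ i ≤ K)
  (hbal : ∀ (a b r : ℝ) (c : ℕ), (a = 1 ∨ a = -1) → (b = 1 ∨ b = -1) → (r = 1 ∨ r = -1) →
    3 ≤ c → c ≤ K → Set.ncard {i | y i = a ∧ ysub i = b ∧ κ i = c ∧ ρ i = r} = T)

include hy hysub hρ hκ hbal

theorem sum_subclass_sign_eq_zero (j : Fin N) :
    ∑ i with (y i, κ i, ρ i) = (y j, κ j, ρ j), ysub i = 0 := by
  have card_eq {b : ℝ} (hb : b = 1 ∨ b = -1) :
      Finset.card {i ∈ {i | (y i, κ i, ρ i) = (y j, κ j, ρ j)} | ysub i = b} = T := by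
    rw [← hbal (y j) b (ρ j) (κ j) (hy j) hb (hρ j) (hκ j).1 (hκ j).2, ← Set.ncard_coe_finset]
    congr 1
    ext i
    simp only [Finset.coe_filter, Finset.mem_filter, Finset.mem_univ, true_and, Prod.mk.injEq,
      Set.mem_ofPred_eq]
    tauto
  exact sum_sign_eq_zero_of_card_eq (fun i _ => hysub i)
    ((card_eq (.inl rfl)).trans (card_eq (.inr rfl)).symm)

theorem isSubclassDataset_of_orthonormal {φ : ℕ → ℝ} {σξ : ℝ} {v : ℕ → Fin D → ℝ}
    (hortho : ∀ i j, i ≤ K + N → j ≤ K + N → v i ⬝ᵥ v j = if i = j then 1 else 0)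
    {x : Fin N → Fin D → ℝ}
    (hx : ∀ i, x i = fun t => v 0 t + y i * φ 1 * v 1 t + ysub i * φ 2 * v 2 t
      + ρ i * φ (κ i) * v (κ i) t + σξ * v (K + 1 + i.1) t) :
    IsSubclassDataset x (fun i => (y i, κ i, ρ i)) ysub
      (fun a => v 0 + (a.1 * φ 1) • v 1 + (a.2.2 * φ a.2.1) • v a.2.1) (v 2)
      (fun i => v (K + 1 + i.1)) (φ 2) σξ := by
  have dot_eq_zero {k l : ℕ} (hk : k ≤ K + N) (hl : l ≤ K + N) (hkl : k ≠ l) : v k ⬝ᵥ v l = 0 :=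
    (hortho k l hk hl).trans (if_neg hkl)
  have dot_common_eq_zero {k : ℕ} (i : Fin N) (hk : k ≤ K + N) (hk2 : 2 ≤ k) (hkκ : k ≠ κ i) :
      v k ⬝ᵥ (v 0 + (y i * φ 1) • v 1 + (ρ i * φ (κ i)) • v (κ i)) = 0 := by
    have := hκ i
    rw [dotProduct_add, dotProduct_add, dotProduct_smul, dotProduct_smul,
      dot_eq_zero hk (by omega) (by omega), dot_eq_zero hk (by omega) (by omega),
      dot_eq_zero hk (by omega) hkκ, smul_zero, smul_zero, add_zero, add_zero]
  exact
    { point_eq := fun i => by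
        ext t
        simp only [hx, Pi.add_apply, Pi.smul_apply, smul_eq_mul]
        ring
      sign_mul_self := fun i => mul_self_eq_one_iff.2 (hysub i)
      balanced := sum_subclass_sign_eq_zero hy hysub hρ hκ hbal
      feature_common := fun i => by
        have := hκ i
        exact dot_common_eq_zero i (by omega) le_rfl (by omega)
      noise_common := fun i j => by
        have := hκ j
        exact dot_common_eq_zero j (by omega) (by omega) (by omega)
      feature_noise := fun i => by
        have := hκ i
        exact dot_eq_zero (by omega) (by omega) (by omega)
      noise_noise := fun i j => by
        refine (hortho _ _ (by omega) (by omega)).trans ?_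
        simp only [add_right_inj, Fin.val_inj] }

end StructuredDataset

theorem stmt_1_general
    (N K T D p : ℕ) (hN : 0 < N) (φ : ℕ → ℝ) (σξ : ℝ) (v : ℕ → Fin D → ℝ)
    (hortho : ∀ i j, i ≤ K + N → j ≤ K + N → v i ⬝ᵥ v j = if i = j then 1 else 0)
    (y ysub ρ : Fin N → ℝ) (κ : Fin N → ℕ)
    (hy : ∀ i, y i = 1 ∨ y i = -1)
    (hysub : ∀ i, ysub i = 1 ∨ ysub i = -1)
    (hρ : ∀ i, ρ i = 1 ∨ ρ i = -1)
    (hκ : ∀ i, 3 ≤ κ i ∧ κ i ≤ K)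
    (hbal : ∀ (a b r : ℝ) (c : ℕ), (a = 1 ∨ a = -1) → (b = 1 ∨ b = -1) → (r = 1 ∨ r = -1) →
      3 ≤ c → c ≤ K → Set.ncard {i | y i = a ∧ ysub i = b ∧ κ i = c ∧ ρ i = r} = T)
    (x : Fin N → Fin D → ℝ)
    (hx : ∀ i, x i = fun t => v 0 t + y i * φ 1 * v 1 t + ysub i * φ 2 * v 2 t
      + ρ i * φ (κ i) * v (κ i) t + σξ * v (K + 1 + i.1) t)
    (M Mp : Matrix (Fin D) (Fin D) ℝ)
    (hM : M = (N : ℝ)⁻¹ • ∑ i, vecMulVec (x i) (x i))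
    (xbar : ℝ → Fin D → ℝ)
    (hxbar : ∀ ε, xbar ε = (2 / (N : ℝ)) • ∑ i, Set.indicator {j | y j = ε} x i)
    (hMp : Mp = (2 : ℝ)⁻¹ • (vecMulVec (xbar 1) (xbar 1) + vecMulVec (xbar (-1)) (xbar (-1))))
    (Wss : Matrix (Fin p) (Fin D) ℝ) (hWss : IsMinNormMinimizer (CLTraceLoss Mp M) Wss) :
    Wss *ᵥ v 2 = 0 := by
  have : Nonempty (Fin N) := ⟨⟨0, hN⟩⟩
  have dataset := isSubclassDataset_of_orthonormal hy hysub hρ hκ hbal hortho hx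
  have proj_xbar (ε : ℝ) : subclassProj ysub (v 2) (fun i => v (K + 1 + i.1)) *ᵥ xbar ε = 0 := by
    have class_sum : ∑ i, Set.indicator {j | y j = ε} x i
        = ∑ i, (if y i = ε then (1 : ℝ) else 0) • x i := by
      simp only [Set.indicator_apply, Set.mem_ofPred_eq, ite_smul, one_smul, zero_smul]
    rw [hxbar, mulVec_smul, class_sum,
      dataset.subclassProj_mulVec_sum_smul_comp fun a => if a.1 = ε then 1 else 0, smul_zero]
  have Mp_symm : Mp.IsSymm := by
    rw [hMp, IsSymm, transpose_smul, transpose_add, transpose_vecMulVec, transpose_vecMulVec]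
  have proj_mul_Mp : subclassProj ysub (v 2) (fun i => v (K + 1 + i.1)) * Mp = 0 := by
    rw [hMp, Matrix.mul_smul, Matrix.mul_add, mul_vecMulVec, mul_vecMulVec, proj_xbar, proj_xbar,
      zero_vecMulVec, zero_vecMulVec, add_zero, smul_zero]
  subst hM
  exact dataset.mulVec_feature_eq_zero (by positivity) Mp_symm proj_mul_Mp hWss

theorem stmt_1
    (m K n D : ℕ)
    (hm : 1 ≤ m) (hK : 3 ≤ K) (hn : 1 ≤ n) (hdiv : 8 * (K - 2) ∣ n)
    (hD : K + 1 + m * n ≤ D)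
    (φ : ℕ → ℝ) (hφ : ∀ j, 1 ≤ j → j ≤ K → 0 < φ j)
    (μ σξ : ℝ) (hσ : 0 < σξ)
    (v : ℕ → Fin D → ℝ)
    (hortho : ∀ i j, i ≤ K + m * n → j ≤ K + m * n →
      (∑ t, v i t * v j t) = if i = j then (1 : ℝ) else 0)
    (y ysub ρ : Fin (m * n) → ℝ) (κ : Fin (m * n) → ℕ)
    (hy : ∀ i, y i = 1 ∨ y i = -1)
    (hysub : ∀ i, ysub i = 1 ∨ ysub i = -1)
    (hρ : ∀ i, ρ i = 1 ∨ ρ i = -1)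
    (hκ : ∀ i, 3 ≤ κ i ∧ κ i ≤ K)
    (hblock : ∀ i j : Fin (m * n), i.1 / m = j.1 / m →
      y i = y j ∧ ysub i = ysub j ∧ κ i = κ j ∧ ρ i = ρ j)
    (hbal : ∀ (a b r : ℝ) (c : ℕ), (a = 1 ∨ a = -1) → (b = 1 ∨ b = -1) →
      (r = 1 ∨ r = -1) → 3 ≤ c → c ≤ K →
      Set.ncard {i : Fin (m * n) | y i = a ∧ ysub i = b ∧ κ i = c ∧ ρ i = r}
        = m * n / (8 * (K - 2)))
    (x : Fin (m * n) → Fin D → ℝ)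
    (hx : ∀ i, x i = fun t => v 0 t + y i * φ 1 * v 1 t + (ysub i * φ 2 + μ) * v 2 t
      + ρ i * φ (κ i) * v (κ i) t + σξ * v (K + 1 + i.1) t)
    (M Mp : Matrix (Fin D) (Fin D) ℝ)
    (hM : M = ((m * n : ℝ))⁻¹ • ∑ i, Matrix.vecMulVec (x i) (x i))
    (xbar : ℝ → Fin D → ℝ)
    (hxbar : ∀ ε, xbar ε = (2 / (m * n : ℝ)) •
      ∑ i, Set.indicator {j : Fin (m * n) | y j = ε} x i)
    (hMp : Mp = (2 : ℝ)⁻¹ • (Matrix.vecMulVec (xbar 1) (xbar 1)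
      + Matrix.vecMulVec (xbar (-1)) (xbar (-1))))
    (hμ : μ = 0) (p : ℕ) (hp : 3 ≤ p) :
    ∀ Wss : Matrix (Fin p) (Fin D) ℝ,
      (∀ W : Matrix (Fin p) (Fin D) ℝ, CLTraceLoss Mp M Wss ≤ CLTraceLoss Mp M W) →
      (∀ W : Matrix (Fin p) (Fin D) ℝ,
        (∀ W' : Matrix (Fin p) (Fin D) ℝ, CLTraceLoss Mp M W ≤ CLTraceLoss Mp M W') →
        Real.sqrt (∑ i, ∑ j, (Wss i j) ^ 2) ≤ Real.sqrt (∑ i, ∑ j, (W i j) ^ 2)) →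
      Wss.mulVec (v 2) = 0 := by
  intro Wss hmin hnorm
  subst hμ
  exact stmt_1_general (m * n) K _ D p (Nat.mul_pos hm hn) φ σξ v hortho y ysub ρ κ hy hysub hρ hκ
    hbal x (by simpa only [add_zero] using hx) M Mp (by simpa using hM) xbar (by simpa using hxbar)
    hMp Wss ⟨hmin, hnorm⟩
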